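/- In the multiple-link price-anticipating mechanism, the unique Nash equilibrium is the all-zero profile (P°, B°) with p°_{mℓ} = 0 and β°_{mℓ} = 0 for all m = 1,…,M and ℓ = 1,…,L: this profile is a Nash equilibrium, and every Nash equilibrium equals it. Hence even with multiple competing links the market collapses with zero participation. -/

import Mathlib

open Finset

/-- User `m`'s pay-off in the multi-link price-anticipating mechanism:
`U(Σ_ℓ p_{mℓ}/μ_{mℓ}) − Σ_ℓ p_{mℓ}` with `μ_{mℓ} = (λ_ℓ + √(λ_ℓ² + 4 p_{mℓ}/β_{mℓ}))/2`. -/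
noncomputable def mlUserPayoff (M L : ℕ) (U : ℝ → ℝ) (lam : Fin L → ℝ)
    (P B : Fin M → Fin L → ℝ) (m : Fin M) : ℝ :=
  U (∑ ℓ, P m ℓ /
      ((lam ℓ + Real.sqrt ((lam ℓ) ^ 2 + 4 * P m ℓ / B m ℓ)) / 2)) - ∑ ℓ, P m ℓ

/-- Link `ℓ`'s pay-off in the multi-link price-anticipating mechanism. -/
noncomputable def mlLinkPayoff (M L : ℕ) (V : ℝ → ℝ) (Cℓ lamℓ : ℝ)
    (P B : Fin M → Fin L → ℝ) (ℓ : Fin L) : ℝ :=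
  if (∑ i, Real.sqrt (P i ℓ * B i ℓ)) ≤ Cℓ then
    -V (∑ i, Real.sqrt (P i ℓ * B i ℓ)) + ∑ i, P i ℓ
  else
    -V Cℓ + ∑ i, (1 / B i ℓ) *
      (2 * P i ℓ / (lamℓ + Real.sqrt (lamℓ ^ 2 + 4 * P i ℓ / B i ℓ))) ^ 2

/-- Replace column `ℓ` of the bid matrix `B` by `β`. -/
def updateCol (M L : ℕ) (B : Fin M → Fin L → ℝ) (ℓ : Fin L) (β : Fin M → ℝ) :
    Fin M → Fin L → ℝ :=
  fun i ℓ' => if ℓ' = ℓ then β i else B i ℓ'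

/-!
A link that bids zero receives every payment and serves nobody, whereas any positive load costs it
something and can never bring in more than the payments offered. So no link trades at equilibrium;
then no user is willing to pay, and all payments vanish. With all payments zero, bidding `x² / β`
against an offer `β > 0` buys the rate `x`, a second-order cost for a first-order gain, so a
positive offer would leave a user with a profitable deviation.
-/

lemma le_sq_add_sqrt_sq_add {l : ℝ} (hl : 0 ≤ l) (x : ℝ) : x ≤ (l + √(l ^ 2 + x)) ^ 2 :=
  calc
    x ≤ l ^ 2 + x := le_add_of_nonneg_left (sq_nonneg l)
    _ ≤ √(l ^ 2 + x) ^ 2 := Real.sq_sqrt'.symm ▸ le_max_left _ _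
    _ ≤ (l + √(l ^ 2 + x)) ^ 2 := by gcongr; exact le_add_of_nonneg_left hl

lemma congested_revenue_le_bid {p l : ℝ} (hp : 0 ≤ p) (hl : 0 ≤ l) (b : ℝ) :
    1 / b * (2 * p / (l + √(l ^ 2 + 4 * p / b))) ^ 2 ≤ p :=
  calc
    1 / b * (2 * p / (l + √(l ^ 2 + 4 * p / b))) ^ 2
        = p * (4 * p / b / (l + √(l ^ 2 + 4 * p / b)) ^ 2) := by
      rw [div_pow]; ring
    _ ≤ p := mul_le_of_le_one_right hp
        (div_le_one_of_le₀ (le_sq_add_sqrt_sq_add hl _) (sq_nonneg _))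

-- At `b = 0` both sides are zero: on the left `4 * p / 0 = 0`, which leaves `p / 0 = 0`.
lemma div_half_sqrt_eq_sqrt_mul {p : ℝ} (hp : 0 ≤ p) (b : ℝ) :
    p / ((0 + √(0 ^ 2 + 4 * p / b)) / 2) = √(p * b) := by
  have h_half : (0 + √(0 ^ 2 + 4 * p / b)) / 2 = √p / √b := by
    rw [← Real.sqrt_div hp, show (0 : ℝ) ^ 2 + 4 * p / b = 2 ^ 2 * (p / b) by ring,
      Real.sqrt_mul (by positivity), Real.sqrt_sq zero_le_two]
    ring
  rw [h_half, div_div_eq_mul_div, mul_div_right_comm, Real.div_sqrt, Real.sqrt_mul hp]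

section Mechanism

variable {M L : ℕ}

/-- The total rate `Σ_i √(p_{iℓ} β_{iℓ})` that link `ℓ` would carry at price `λ_ℓ = 0`; the link is
congested when this exceeds its capacity. -/
noncomputable def mlLoad (P B : Fin M → Fin L → ℝ) (ℓ : Fin L) : ℝ :=
  ∑ i, √(P i ℓ * B i ℓ)

/-- `price P B ℓ` is a choice of the price `λ_ℓ` for all nonnegative bids: zero on an uncongested
link, and a positive solution of the capacity equation on a congested one. For `β_{iℓ} = 0` on a
congested link, the convention `x / 0 = 0` makes the `i`-th summand `p_{iℓ} / λ_ℓ`. -/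
def IsMlPrice (C : Fin L → ℝ)
    (price : (Fin M → Fin L → ℝ) → (Fin M → Fin L → ℝ) → Fin L → ℝ) : Prop :=
  ∀ P B : Fin M → Fin L → ℝ, (∀ m ℓ, 0 ≤ P m ℓ) → (∀ m ℓ, 0 ≤ B m ℓ) → ∀ ℓ,
    (mlLoad P B ℓ ≤ C ℓ → price P B ℓ = 0) ∧
    (¬ mlLoad P B ℓ ≤ C ℓ → 0 < price P B ℓ ∧
      ∑ i, 2 * P i ℓ / (price P B ℓ + √(price P B ℓ ^ 2 + 4 * P i ℓ / B i ℓ)) = C ℓ)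

/-- Nash equilibria of the multi-link mechanism, among nonnegative bids: a user anticipates the
effect of its bids on all prices, and a link that of its offers on its own price. -/
structure IsMlNash (C : Fin L → ℝ) (U : Fin M → ℝ → ℝ) (V : Fin L → ℝ → ℝ)
    (price : (Fin M → Fin L → ℝ) → (Fin M → Fin L → ℝ) → Fin L → ℝ)
    (P B : Fin M → Fin L → ℝ) : Prop where
  bid_nonneg : ∀ m ℓ, 0 ≤ P m ℓ
  offer_nonneg : ∀ m ℓ, 0 ≤ B m ℓ
  user_optimal : ∀ m, ∀ q : Fin L → ℝ, (∀ ℓ, 0 ≤ q ℓ) →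
    mlUserPayoff M L (U m) (price (Function.update P m q) B) (Function.update P m q) B m ≤
      mlUserPayoff M L (U m) (price P B) P B m
  link_optimal : ∀ ℓ, ∀ β : Fin M → ℝ, (∀ i, 0 ≤ β i) →
    mlLinkPayoff M L (V ℓ) (C ℓ) (price P (updateCol M L B ℓ β) ℓ) P (updateCol M L B ℓ β) ℓ ≤
      mlLinkPayoff M L (V ℓ) (C ℓ) (price P B ℓ) P B ℓ

variable {C : Fin L → ℝ} {U : Fin M → ℝ → ℝ} {V : Fin L → ℝ → ℝ}
  {price : (Fin M → Fin L → ℝ) → (Fin M → Fin L → ℝ) → Fin L → ℝ} {P B : Fin M → Fin L → ℝ}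

lemma mlLoad_nonneg (P B : Fin M → Fin L → ℝ) (ℓ : Fin L) : 0 ≤ mlLoad P B ℓ :=
  sum_nonneg fun _ _ => Real.sqrt_nonneg _

lemma mlLoad_update_zero (m : Fin M) (q : Fin L → ℝ) (B : Fin M → Fin L → ℝ) (ℓ : Fin L) :
    mlLoad (Function.update 0 m q) B ℓ = √(q ℓ * B m ℓ) := by
  rw [mlLoad, sum_eq_single_of_mem m (mem_univ m), Function.update_self]
  intro i _ hi
  simp [Function.update_of_ne hi]

lemma mlUserPayoff_of_price_eq_zero {lam : Fin L → ℝ} {m : Fin M} (hlam : ∀ ℓ, lam ℓ = 0)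
    (hP : ∀ ℓ, 0 ≤ P m ℓ) (u : ℝ → ℝ) (B : Fin M → Fin L → ℝ) :
    mlUserPayoff M L u lam P B m = u (∑ ℓ, √(P m ℓ * B m ℓ)) - ∑ ℓ, P m ℓ := by
  simp only [mlUserPayoff, hlam, div_half_sqrt_eq_sqrt_mul (hP _)]

lemma mlUserPayoff_update_bid_zero (u : ℝ → ℝ) (lam : Fin L → ℝ) (P B : Fin M → Fin L → ℝ)
    (m : Fin M) : mlUserPayoff M L u lam (Function.update P m 0) B m = u 0 := by
  simp [mlUserPayoff]

lemma mlLinkPayoff_updateCol_zero {c : ℝ} (hc : 0 ≤ c) (v : ℝ → ℝ) (lam : ℝ)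
    (P B : Fin M → Fin L → ℝ) (ℓ : Fin L) :
    mlLinkPayoff M L v c lam P (updateCol M L B ℓ 0) ℓ = -v 0 + ∑ i, P i ℓ := by
  simp [mlLinkPayoff, updateCol, hc]

lemma mlLinkPayoff_le {c lam : ℝ} {ℓ : Fin L} (hP : ∀ i, 0 ≤ P i ℓ)
    (hlam : c < mlLoad P B ℓ → 0 ≤ lam) (v : ℝ → ℝ) :
    mlLinkPayoff M L v c lam P B ℓ ≤ -v (min (mlLoad P B ℓ) c) + ∑ i, P i ℓ := by
  rw [mlLinkPayoff, ← mlLoad]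
  split_ifs with h_load
  · rw [min_eq_left h_load]
  · have h_congested : c < mlLoad P B ℓ := not_le.mp h_load
    rw [min_eq_right h_congested.le]
    gcongr with i
    exact congested_revenue_le_bid (hP i) (hlam h_congested) _

lemma IsMlPrice.eq_zero_of_bid_zero_except (hprice : IsMlPrice C price) (hB : ∀ m ℓ, 0 ≤ B m ℓ)
    {m : Fin M} {q : Fin L → ℝ} (hq : ∀ ℓ, 0 ≤ q ℓ) {ℓ : Fin L} (h_cap : √(q ℓ * B m ℓ) ≤ C ℓ) :
    price (Function.update 0 m q) B ℓ = 0 :=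
  have h_nonneg : 0 ≤ Function.update (0 : Fin M → Fin L → ℝ) m q :=
    le_update_iff.mpr ⟨hq, fun _ _ => le_rfl⟩
  (hprice _ B h_nonneg hB ℓ).1 (mlLoad_update_zero m q B ℓ ▸ h_cap)

lemma isMlNash_zero (hC : ∀ ℓ, 0 ≤ C ℓ) (hprice : IsMlPrice C price) :
    IsMlNash C U V price 0 0 where
  bid_nonneg _ _ := le_rfl
  offer_nonneg _ _ := le_rfl
  user_optimal m q hq := by
    have h_price : ∀ ℓ, price (Function.update 0 m q) 0 ℓ = 0 := fun ℓ =>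
      hprice.eq_zero_of_bid_zero_except (fun _ _ => le_rfl) hq (by simpa using hC ℓ)
    rw [mlUserPayoff_of_price_eq_zero h_price (by simpa using hq)]
    simpa [mlUserPayoff] using sum_nonneg fun ℓ _ => hq ℓ
  link_optimal ℓ β _ := by simp [mlLinkPayoff, hC ℓ]

namespace IsMlNash

lemma mlLoad_eq_zero (h : IsMlNash C U V price P B) (hC : ∀ ℓ, 0 < C ℓ)
    (hprice : IsMlPrice C price) (hV : ∀ ℓ x, 0 < x → V ℓ 0 < V ℓ x) (ℓ : Fin L) :
    mlLoad P B ℓ = 0 := by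
  by_contra h_ne
  have h_pos : 0 < mlLoad P B ℓ := (mlLoad_nonneg P B ℓ).lt_of_ne' h_ne
  have h_withdraw := h.link_optimal ℓ 0 fun _ => le_rfl
  rw [mlLinkPayoff_updateCol_zero (hC ℓ).le] at h_withdraw
  have h_payoff := mlLinkPayoff_le (h.bid_nonneg · ℓ)
    (fun h_congested => ((hprice P B h.bid_nonneg h.offer_nonneg ℓ).2 h_congested.not_ge).1.le)
    (V ℓ)
  have h_cost := hV ℓ _ (lt_min h_pos (hC ℓ))
  linarith

lemma bid_eq_zero (h : IsMlNash C U V price P B) (hC : ∀ ℓ, 0 ≤ C ℓ)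
    (hprice : IsMlPrice C price) (h_load : ∀ ℓ, mlLoad P B ℓ = 0) : P = 0 := by
  have h_price : ∀ ℓ, price P B ℓ = 0 := fun ℓ =>
    (hprice P B h.bid_nonneg h.offer_nonneg ℓ).1 (h_load ℓ ▸ hC ℓ)
  have h_rate : ∀ m ℓ, √(P m ℓ * B m ℓ) = 0 := fun m ℓ =>
    (sum_eq_zero_iff_of_nonneg fun _ _ => Real.sqrt_nonneg _).mp (h_load ℓ) m (mem_univ m)
  ext m ℓ
  have h_withdraw := h.user_optimal m 0 fun _ => le_rfl
  rw [mlUserPayoff_update_bid_zero, mlUserPayoff_of_price_eq_zero h_price (h.bid_nonneg m)]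
    at h_withdraw
  simp only [h_rate, sum_const_zero] at h_withdraw
  have h_spent : ∑ ℓ, P m ℓ = 0 :=
    le_antisymm (by linarith) (sum_nonneg fun ℓ _ => h.bid_nonneg m ℓ)
  exact (sum_eq_zero_iff_of_nonneg fun ℓ _ => h.bid_nonneg m ℓ).mp h_spent ℓ (mem_univ ℓ)

lemma payoff_sub_sq_div_le (h : IsMlNash C U V price 0 B) (hC : ∀ ℓ, 0 ≤ C ℓ)
    (hprice : IsMlPrice C price) {m : Fin M} {ℓ : Fin L} (hb : 0 < B m ℓ) {x : ℝ}
    (hx : x ∈ Set.Icc 0 (C ℓ)) : U m x - x ^ 2 / B m ℓ ≤ U m 0 := by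
  let q : Fin L → ℝ := Pi.single ℓ (x ^ 2 / B m ℓ)
  have hq : 0 ≤ q := Pi.single_nonneg.mpr (by positivity)
  have h_rate : ∀ k, √(q k * B m k) = (Pi.single ℓ x : Fin L → ℝ) k := fun k => by
    obtain rfl | hk := eq_or_ne k ℓ
    · simp [q, div_mul_cancel₀ _ hb.ne', Real.sqrt_sq hx.1]
    · simp [q, hk]
  have h_price : ∀ k, price (Function.update 0 m q) B k = 0 := fun k =>
    hprice.eq_zero_of_bid_zero_except h.offer_nonneg hq <| by
      rw [h_rate]
      obtain rfl | hk := eq_or_ne k ℓ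
      · simpa using hx.2
      · simpa [hk] using hC k
  have h_deviate := h.user_optimal m q hq
  rw [mlUserPayoff_of_price_eq_zero h_price (fun k => by simpa using hq k)] at h_deviate
  simpa [h_rate, q, mlUserPayoff] using h_deviate

lemma offer_eq_zero (h : IsMlNash C U V price 0 B) (hC : ∀ ℓ, 0 < C ℓ)
    (hprice : IsMlPrice C price) {U' : Fin M → ℝ}
    (hU : ∀ m, HasDerivWithinAt (U m) (U' m) (Set.Ici 0) 0) (hU' : ∀ m, 0 < U' m) : B = 0 := by
  ext m ℓ
  by_contra h_ne
  have hb : 0 < B m ℓ := (h.offer_nonneg m ℓ).lt_of_ne' h_ne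
  have h_max : IsMaxOn (fun x => U m x - x ^ 2 / B m ℓ) (Set.Icc 0 (C ℓ)) 0 := fun x hx => by
    simpa using h.payoff_sub_sq_div_le (fun ℓ => (hC ℓ).le) hprice hb hx
  have h_deriv : HasDerivWithinAt (fun x => U m x - x ^ 2 / B m ℓ) (U' m) (Set.Icc 0 (C ℓ)) 0 := by
    simpa using! ((hU m).mono Set.Icc_subset_Ici_self).sub
      (((hasDerivWithinAt_id 0 _).pow 2).div_const (B m ℓ))
  have h_nonpos := h_max.localize.hasFDerivWithinAt_nonpos h_deriv.hasFDerivWithinAt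
    (mem_posTangentConeAt_of_segment_subset (y := C ℓ) (by simp [segment_eq_Icc (hC ℓ).le]))
  exact (mul_pos (hC ℓ) (hU' m)).not_ge (by simpa using h_nonpos)

end IsMlNash

end Mechanism

theorem statement15_general {M L : ℕ} {C : Fin L → ℝ} (hC : ∀ ℓ, 0 < C ℓ)
    {U : Fin M → ℝ → ℝ} {U' : Fin M → ℝ}
    (hU : ∀ m, HasDerivWithinAt (U m) (U' m) (Set.Ici 0) 0) (hU' : ∀ m, 0 < U' m)
    {V : Fin L → ℝ → ℝ} (hV : ∀ ℓ x, 0 < x → V ℓ 0 < V ℓ x)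
    {price : (Fin M → Fin L → ℝ) → (Fin M → Fin L → ℝ) → Fin L → ℝ} (hprice : IsMlPrice C price)
    (P B : Fin M → Fin L → ℝ) : IsMlNash C U V price P B ↔ P = 0 ∧ B = 0 := by
  have hC_nonneg : ∀ ℓ, 0 ≤ C ℓ := fun ℓ => (hC ℓ).le
  constructor
  · intro h
    obtain rfl : P = 0 := h.bid_eq_zero hC_nonneg hprice (h.mlLoad_eq_zero hC hprice hV)
    exact ⟨rfl, h.offer_eq_zero hC hprice hU hU'⟩
  · rintro ⟨rfl, rfl⟩
    exact isMlNash_zero hC_nonneg hprice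

/-- Multi-link price-anticipating scenario: the unique Nash
equilibrium is the all-zero profile.  The all-zero bid matrices form a Nash
equilibrium, and every Nash equilibrium has `p_{mℓ} = 0` and `β_{mℓ} = 0` for all
`m, ℓ`: the market collapses with zero participation. -/
theorem statement15
    (M L : ℕ) (hM : 0 < M) (hL : 0 < L)
    (C : Fin L → ℝ) (hC : ∀ ℓ, 0 < C ℓ)
    (U : Fin M → ℝ → ℝ) (V : Fin L → ℝ → ℝ)
    (hUconc : ∀ m, ConcaveOn ℝ (Set.Ici 0) (U m))
    (hUmono : ∀ m, StrictMonoOn (U m) (Set.Ici 0))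
    (hUdiff : ∀ m, ∀ x ∈ Set.Ici (0:ℝ), DifferentiableAt ℝ (U m) x)
    (hUderivcont : ∀ m, ContinuousOn (deriv (U m)) (Set.Ici 0))
    (hUderiv0 : ∀ m, 0 < deriv (U m) 0)
    (hVconv : ∀ ℓ, StrictConvexOn ℝ (Set.Ici 0) (V ℓ))
    (hVmono : ∀ ℓ, StrictMonoOn (V ℓ) (Set.Ici 0))
    (hVdiff : ∀ ℓ, ∀ x ∈ Set.Ici (0:ℝ), DifferentiableAt ℝ (V ℓ) x)
    (hVderivcont : ∀ ℓ, ContinuousOn (deriv (V ℓ)) (Set.Ici 0))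
    (lamFn : (Fin M → Fin L → ℝ) → (Fin M → Fin L → ℝ) → Fin L → ℝ)
    (hlamFn : ∀ P B : Fin M → Fin L → ℝ,
      (∀ m ℓ, 0 ≤ P m ℓ) → (∀ m ℓ, 0 ≤ B m ℓ) → ∀ ℓ,
      ((∑ i, Real.sqrt (P i ℓ * B i ℓ)) ≤ C ℓ → lamFn P B ℓ = 0) ∧
      (¬ (∑ i, Real.sqrt (P i ℓ * B i ℓ)) ≤ C ℓ →
        0 < lamFn P B ℓ ∧
        (∑ i, 2 * P i ℓ /
          (lamFn P B ℓ +
            Real.sqrt ((lamFn P B ℓ) ^ 2 + 4 * P i ℓ / B i ℓ))) = C ℓ)) :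
    -- the all-zero profile is a Nash equilibrium …
    ((∀ m : Fin M, ∀ q : Fin L → ℝ, (∀ ℓ, 0 ≤ q ℓ) →
        mlUserPayoff M L (U m)
          (lamFn (Function.update (fun _ _ => (0:ℝ)) m q) (fun _ _ => (0:ℝ)))
          (Function.update (fun _ _ => (0:ℝ)) m q) (fun _ _ => (0:ℝ)) m ≤
        mlUserPayoff M L (U m)
          (lamFn (fun _ _ => (0:ℝ)) (fun _ _ => (0:ℝ)))
          (fun _ _ => (0:ℝ)) (fun _ _ => (0:ℝ)) m) ∧
     (∀ ℓ : Fin L, ∀ β : Fin M → ℝ, (∀ i, 0 ≤ β i) →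
        mlLinkPayoff M L (V ℓ) (C ℓ)
          (lamFn (fun _ _ => (0:ℝ)) (updateCol M L (fun _ _ => (0:ℝ)) ℓ β) ℓ)
          (fun _ _ => (0:ℝ)) (updateCol M L (fun _ _ => (0:ℝ)) ℓ β) ℓ ≤
        mlLinkPayoff M L (V ℓ) (C ℓ)
          (lamFn (fun _ _ => (0:ℝ)) (fun _ _ => (0:ℝ)) ℓ)
          (fun _ _ => (0:ℝ)) (fun _ _ => (0:ℝ)) ℓ)) ∧
    -- … and every Nash equilibrium is the all-zero profile
    (∀ P B : Fin M → Fin L → ℝ,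
      (∀ m ℓ, 0 ≤ P m ℓ) → (∀ m ℓ, 0 ≤ B m ℓ) →
      (∀ m : Fin M, ∀ q : Fin L → ℝ, (∀ ℓ, 0 ≤ q ℓ) →
        mlUserPayoff M L (U m) (lamFn (Function.update P m q) B)
          (Function.update P m q) B m ≤
        mlUserPayoff M L (U m) (lamFn P B) P B m) →
      (∀ ℓ : Fin L, ∀ β : Fin M → ℝ, (∀ i, 0 ≤ β i) →
        mlLinkPayoff M L (V ℓ) (C ℓ)
          (lamFn P (updateCol M L B ℓ β) ℓ) P (updateCol M L B ℓ β) ℓ ≤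
        mlLinkPayoff M L (V ℓ) (C ℓ) (lamFn P B ℓ) P B ℓ) →
      (∀ m ℓ, P m ℓ = 0 ∧ B m ℓ = 0)) := by
  have h_iff := statement15_general hC
    (fun m => (hUdiff m 0 Set.self_mem_Ici).hasDerivAt.hasDerivWithinAt) hUderiv0
    (fun ℓ x hx => hVmono ℓ Set.self_mem_Ici hx.le hx) hlamFn
  have h_zero := (h_iff 0 0).mpr ⟨rfl, rfl⟩
  refine ⟨⟨h_zero.user_optimal, h_zero.link_optimal⟩, fun P B hP hB hu hl m ℓ => ?_⟩
  obtain ⟨rfl, rfl⟩ := (h_iff P B).mp ⟨hP, hB, hu, hl⟩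
  exact ⟨rfl, rfl⟩
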